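/- Let χ be a kernel (conditions (χ1)–(χ4)) whose Lipschitz function L of condition (χ3) has compact support, let φ be a convex φ-function satisfying condition (H) with η convex, and let f ∈ L^{φ+η}(ℝ). Then for every 0 < α < 1 there exist constants μ > 0 and λ₀ > 0 such that, for every sufficiently large w > 0, I^φ[μ(S_w f − f)] ≤ (‖L‖₁/(3δ m_{0,Π}(L))) ω(f, 1/w^α)_η + (Δ/(3δ)) ω(f, Δ/w)_η + (I^φ[λ₀ f]/3) w^{−θ₀}, where m_{0,Π}(L) := sup_{u∈ℝ} ∑_{k∈ℤ} L(u − t_k) < +∞ and θ₀ > 0 is the constant of condition (χ4). -/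

import Mathlib

/-!
The error `S_w f - f` is split as `A₁ + A₂ + A₃`. Here `A₁` replaces the mean of `f` over the cell
`(t k / w, t (k + 1) / w]` by the mean of the translate `f (· + x - t k / w)`, `A₂` replaces that
mean by `f x`, and `A₃ = ∑ χ (w x - t k, f x) - f x`. Convexity of `φ` gives
`φ (μ |A₁ + A₂ + A₃|) ≤ (φ (3 μ |A₁|) + φ (3 μ |A₂|) + φ (3 μ |A₃|)) / 3`.

For `A₁` and `A₂`, the Lipschitz condition, Jensen's inequality with the weights
`L (w x - t k) / m_{0,Π}(L)` and condition (H) (`phi_series_diff_le`), then Jensen's inequality on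
each cell (`eta_cell_average_le`), bound the modular integrand by averages of
`η (lam |f (u + y) - f u|)`. Tonelli's theorem then gives the first two terms: for `A₁`, translation
by `t k / w` makes the cells tile the line, and compact support of `L` restricts the shift to
`|y| ≤ R / w ≤ w ^ (-α)` (`lintegral_translated_cells_le`); for `A₂`, the shift lies in
`(0, Δ / w]` (`tsum_cells_le`, `lintegral_setLIntegral_le`). The term `A₃` is bounded by `(χ4)` and
`φ (c u) ≤ c φ u` for `c ≤ 1`.

The moment `m_{0,Π}(L)` is finite because `L` is bounded near `0` and has a finite moment of positive
order, and nonzero because otherwise `χ = 0`, against `(χ4)`. All estimates are carried out for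
`ℝ≥0∞`-valued integrals, which makes measurability of `S_w f` unnecessary.
-/

open MeasureTheory Filter Real Set

noncomputable section

/-- A φ-function. -/
def IsPhiFun (φ : ℝ → ℝ) : Prop :=
  ContinuousOn φ (Set.Ici 0) ∧ φ 0 = 0 ∧ MonotoneOn φ (Set.Ici 0) ∧
    (∀ u : ℝ, 0 < u → 0 < φ u) ∧ Tendsto φ atTop atTop

/-- Discrete absolute moment of order `β` (ENNReal-valued). -/
def dMoment (t : ℤ → ℝ) (L : ℝ → ℝ) (β : ℝ) : ENNReal :=
  ⨆ u : ℝ, ∑' k : ℤ, ENNReal.ofReal (L (u - t k) * |u - t k| ^ β)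

/-- `m_{0,Π}(L)` as a real number. -/
def m0R (t : ℤ → ℝ) (L : ℝ → ℝ) : ℝ :=
  (⨆ u : ℝ, ∑' k : ℤ, ENNReal.ofReal (L (u - t k))).toReal

/-- The modular functional `I^φ[f] = ∫_ℝ φ(|f(x)|) dx`. -/
def Iph (φ : ℝ → ℝ) (f : ℝ → ℝ) : ℝ := ∫ x : ℝ, φ (|f x|)

/-- Modulus of continuity in the Orlicz space generated by `η`, with parameter `lam`. -/
def omegaMod (η : ℝ → ℝ) (lam : ℝ) (f : ℝ → ℝ) (d : ℝ) : ℝ :=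
  ⨆ s : {s : ℝ // |s| ≤ d}, ∫ x : ℝ, η (lam * |f (x + (s : ℝ)) - f x|)

/-- The nonlinear sampling Kantorovich operator `S_w` based on the kernel `χ`. -/
def SwOp (t : ℤ → ℝ) (χ : ℝ → ℝ → ℝ) (f : ℝ → ℝ) (w x : ℝ) : ℝ :=
  ∑' k : ℤ, χ (w * x - t k)
    ((w / (t (k + 1) - t k)) * ∫ u in (t k / w)..(t (k + 1) / w), f u)

/-! ### φ-functions and Jensen's inequality -/

lemma IsPhiFun.nonneg {φ : ℝ → ℝ} (h : IsPhiFun φ) {u : ℝ} (hu : 0 ≤ u) : 0 ≤ φ u := by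
  rcases hu.eq_or_lt with rfl | hu
  · exact h.2.1.ge
  · exact (h.2.2.2.1 u hu).le

lemma IsPhiFun.mono {φ : ℝ → ℝ} (h : IsPhiFun φ) {u v : ℝ} (hu : 0 ≤ u) (huv : u ≤ v) :
    φ u ≤ φ v :=
  h.2.2.1 hu (hu.trans huv) huv

/-- A φ-function is controlled only on `[0, ∞)`, so measurability is obtained after composing
with `|·|`. -/
lemma IsPhiFun.measurable_mul_abs {φ : ℝ → ℝ} (h : IsPhiFun φ) {X : Type*} [MeasurableSpace X]
    {g : X → ℝ} (hg : Measurable g) {c : ℝ} (hc : 0 ≤ c) :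
    Measurable fun x => φ (c * |g x|) := by
  have hcont : Continuous fun u : ℝ => φ |u| :=
    h.1.comp_continuous continuous_abs fun u => abs_nonneg u
  have hm := hcont.measurable.comp (hg.const_mul c)
  have heq : (fun x => φ (c * |g x|)) = (fun u : ℝ => φ |u|) ∘ fun x => c * g x := by
    funext x
    simp [abs_mul, abs_of_nonneg hc]
  rw [heq]
  exact hm

lemma phi_smul_le {φ : ℝ → ℝ} (h : IsPhiFun φ) (hc : ConvexOn ℝ (Set.Ici 0) φ)
    {a u : ℝ} (ha : 0 ≤ a) (ha1 : a ≤ 1) (hu : 0 ≤ u) : φ (a * u) ≤ a * φ u := by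
  have := hc.2 (x := u) (y := 0) hu (Set.mem_Ici.2 le_rfl) ha (sub_nonneg.2 ha1) (by ring)
  simpa [h.2.1] using this

/-- Convexity splits a sum of three terms at the cost of a factor `3` in each argument. -/
lemma phi_add_three_le {φ : ℝ → ℝ} (hc : ConvexOn ℝ (Set.Ici 0) φ)
    {a b c : ℝ} (ha : 0 ≤ a) (hb : 0 ≤ b) (hc' : 0 ≤ c) :
    φ (a + b + c) ≤ 1 / 3 * (φ (3 * a) + φ (3 * b) + φ (3 * c)) := by
  have h2 := hc.2 (x := 3 * a) (y := (3 / 2) * (b + c)) (Set.mem_Ici.2 (by positivity))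
    (Set.mem_Ici.2 (by positivity)) (show (0 : ℝ) ≤ 1 / 3 by norm_num)
    (show (0 : ℝ) ≤ 2 / 3 by norm_num) (by norm_num)
  have h1 := hc.2 (x := 3 * b) (y := 3 * c) (Set.mem_Ici.2 (by positivity))
    (Set.mem_Ici.2 (by positivity)) (show (0 : ℝ) ≤ 1 / 2 by norm_num)
    (show (0 : ℝ) ≤ 1 / 2 by norm_num) (by norm_num)
  simp only [smul_eq_mul] at h1 h2
  have e1 : 1 / 2 * (3 * b) + 1 / 2 * (3 * c) = (3 / 2) * (b + c) := by ring
  have e2 : 1 / 3 * (3 * a) + 2 / 3 * (3 / 2 * (b + c)) = a + b + c := by ring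
  rw [e1] at h1
  rw [e2] at h2
  linarith

/-- Integral Jensen inequality on an interval, in `ℝ≥0∞` so that no integrability of
`η (lam * |g|)` is required. -/
lemma eta_average_le {η : ℝ → ℝ} (hη : IsPhiFun η) (hηc : ConvexOn ℝ (Set.Ici 0) η)
    {lam : ℝ} (hlam : 0 ≤ lam) {g : ℝ → ℝ} (hg : Measurable g) {a b : ℝ} (hab : a < b)
    (hgi : IntervalIntegrable g volume a b) :
    ENNReal.ofReal (η (lam * |(b - a)⁻¹ * ∫ u in a..b, g u|)) ≤
      ENNReal.ofReal ((b - a)⁻¹) * ∫⁻ u in Set.Ioc a b, ENNReal.ofReal (η (lam * |g u|)) := by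
  have hba : 0 < (b - a)⁻¹ := inv_pos.2 (sub_pos.2 hab)
  by_cases htop : ∫⁻ u in Set.Ioc a b, ENNReal.ofReal (η (lam * |g u|)) = ⊤
  · rw [htop, ENNReal.mul_top (by simpa using hab)]
    exact le_top
  have hpos : ∀ u, 0 ≤ η (lam * |g u|) := fun u => hη.nonneg (by positivity)
  have hm := hη.measurable_mul_abs hg hlam
  have hint : IntegrableOn (fun u => η (lam * |g u|)) (Set.Ioc a b) := by
    refine ⟨hm.aestronglyMeasurable, ?_⟩
    rw [hasFiniteIntegral_iff_ofReal (Eventually.of_forall hpos)]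
    exact lt_top_iff_ne_top.2 htop
  have hgi' : IntegrableOn g (Set.Ioc a b) :=
    (intervalIntegrable_iff_integrableOn_Ioc_of_le hab.le).1 hgi
  have hvol : volume (Set.Ioc a b) = ENNReal.ofReal (b - a) := Real.volume_Ioc
  have key := hηc.map_set_average_le (μ := volume) (t := Set.Ioc a b)
    (f := fun u => lam * |g u|) hη.1 isClosed_Ici
    (by rw [hvol]; simpa using hab) (by rw [hvol]; exact ENNReal.ofReal_ne_top)
    (Eventually.of_forall fun u => Set.mem_Ici.2 (by positivity))
    (hgi'.abs.const_mul lam) hint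
  have hreal : volume.real (Set.Ioc a b) = b - a := by
    rw [Measure.real, hvol, ENNReal.toReal_ofReal (sub_pos.2 hab).le]
  rw [setAverage_eq, setAverage_eq, hreal, smul_eq_mul, smul_eq_mul] at key
  rw [← ofReal_integral_eq_lintegral_ofReal hint (Eventually.of_forall hpos),
    ← ENNReal.ofReal_mul hba.le]
  refine ENNReal.ofReal_le_ofReal (le_trans (hη.mono (by positivity) ?_) key)
  rw [integral_const_mul, abs_mul, abs_of_pos hba, intervalIntegral.integral_of_le hab.le]
  have := abs_integral_le_integral_abs (f := g) (μ := volume.restrict (Set.Ioc a b))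
  calc lam * ((b - a)⁻¹ * |∫ u in Set.Ioc a b, g u|)
      ≤ lam * ((b - a)⁻¹ * ∫ u in Set.Ioc a b, |g u|) := by gcongr
    _ = _ := by ring

/-! ### The nodes and the moment `m_{0,Π}(L)` -/

lemma nodes_strictMono {t : ℤ → ℝ} {δ : ℝ} (hδ : 0 < δ) (hgap : ∀ k : ℤ, δ ≤ t (k + 1) - t k) :
    StrictMono t :=
  strictMono_int_of_lt_succ fun k => by linarith [hgap k]

lemma nodes_sep {t : ℤ → ℝ} {δ : ℝ} (hδ : 0 < δ) (hgap : ∀ k : ℤ, δ ≤ t (k + 1) - t k)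
    {j k : ℤ} (hjk : j < k) : δ ≤ t k - t j := by
  have := (nodes_strictMono hδ hgap).monotone (show j + 1 ≤ k by lia)
  linarith [hgap j]

/-- Away from `0` the weight `L` is dominated by `L · |·|^β / ε^β`; within distance `ε ≤ δ/3` of
any point there is at most one node, so the bounded part of `L` contributes at most once. -/
lemma iSup_tsum_ne_top {t : ℤ → ℝ} {δ : ℝ} (hδ : 0 < δ) (hgap : ∀ k : ℤ, δ ≤ t (k + 1) - t k)
    {L : ℝ → ℝ} (hLnonneg : ∀ x, 0 ≤ L x)
    (hLbd : ∃ ε > (0 : ℝ), ∃ B : ℝ, ∀ x : ℝ, |x| ≤ ε → L x ≤ B)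
    (hL2 : ∃ β₀ > (0 : ℝ), dMoment t L β₀ < ⊤) :
    (⨆ u : ℝ, ∑' k : ℤ, ENNReal.ofReal (L (u - t k))) ≠ ⊤ := by
  obtain ⟨ε₁, hε₁, B, hB⟩ := hLbd
  obtain ⟨β, hβ, hM⟩ := hL2
  set ε := min ε₁ (δ / 3) with hεdef
  have hε : 0 < ε := lt_min hε₁ (by positivity)
  have hbound : ∀ u : ℝ, ∑' k : ℤ, ENNReal.ofReal (L (u - t k)) ≤
      ENNReal.ofReal ((ε ^ β)⁻¹) * dMoment t L β + ENNReal.ofReal B := by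
    intro u
    have hterm : ∀ k : ℤ, ENNReal.ofReal (L (u - t k)) ≤
        ENNReal.ofReal ((ε ^ β)⁻¹) * ENNReal.ofReal (L (u - t k) * |u - t k| ^ β) +
          (if |u - t k| ≤ ε then ENNReal.ofReal B else 0) := by
      intro k
      split_ifs with h
      · exact le_add_left (ENNReal.ofReal_le_ofReal (hB _ (h.trans (min_le_left _ _))))
      · rw [add_zero, ← ENNReal.ofReal_mul (by positivity)]
        apply ENNReal.ofReal_le_ofReal
        have h1 : ε ^ β ≤ |u - t k| ^ β :=
          Real.rpow_le_rpow hε.le (not_le.1 h).le hβ.le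
        have h2 : 0 < ε ^ β := Real.rpow_pos_of_pos hε β
        rw [inv_mul_eq_div, le_div_iff₀ h2]
        exact mul_le_mul_of_nonneg_left h1 (hLnonneg _)
    have hone : ∑' k : ℤ, (if |u - t k| ≤ ε then ENNReal.ofReal B else 0) ≤ ENNReal.ofReal B := by
      by_cases hex : ∃ k₀, |u - t k₀| ≤ ε
      · obtain ⟨k₀, hk₀⟩ := hex
        rw [tsum_eq_single k₀]
        · simp [hk₀]
        · intro k hk
          rw [if_neg]
          intro hk'
          have h3 : ε ≤ δ / 3 := min_le_right _ _
          rw [abs_le] at hk' hk₀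
          rcases lt_or_gt_of_ne hk with h | h
          · linarith [nodes_sep hδ hgap h]
          · linarith [nodes_sep hδ hgap h]
      · push Not at hex
        have : ∀ k : ℤ, (if |u - t k| ≤ ε then ENNReal.ofReal B else 0) = 0 :=
          fun k => if_neg (not_le.2 (hex k))
        simp [this]
    calc ∑' k : ℤ, ENNReal.ofReal (L (u - t k)) ≤ _ := ENNReal.tsum_le_tsum hterm
      _ = ENNReal.ofReal ((ε ^ β)⁻¹) * ∑' k : ℤ, ENNReal.ofReal (L (u - t k) * |u - t k| ^ β)
          + ∑' k : ℤ, (if |u - t k| ≤ ε then ENNReal.ofReal B else 0) := by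
        rw [ENNReal.tsum_add, ENNReal.tsum_mul_left]
      _ ≤ _ := by
        gcongr
        exact le_iSup (fun u : ℝ => ∑' k : ℤ, ENNReal.ofReal (L (u - t k) * |u - t k| ^ β)) u
  refine ne_top_of_le_ne_top ?_ (iSup_le hbound)
  exact ENNReal.add_ne_top.2 ⟨ENNReal.mul_ne_top ENNReal.ofReal_ne_top hM.ne, ENNReal.ofReal_ne_top⟩

/-- If the moment vanished, then `L = 0`, hence `χ = 0`, contradicting `(χ4)`. -/
lemma iSup_tsum_ne_zero {t : ℤ → ℝ} {χ : ℝ → ℝ → ℝ} {L ψ : ℝ → ℝ}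
    (hLnonneg : ∀ x, 0 ≤ L x) (hχ2 : ∀ x : ℝ, χ x 0 = 0)
    (hχ3 : ∀ x u v : ℝ, |χ x u - χ x v| ≤ L x * ψ (|u - v|))
    {θ₀ : ℝ} (hθ₀ : 0 < θ₀)
    (hχ4 : ∃ M₂ > (0 : ℝ), ∃ W : ℝ, ∀ w ≥ W, ∀ x u : ℝ, u ≠ 0 →
      |(∑' k : ℤ, χ (w * x - t k) u) / u - 1| ≤ M₂ * w ^ (-θ₀)) :
    (⨆ u : ℝ, ∑' k : ℤ, ENNReal.ofReal (L (u - t k))) ≠ 0 := by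
  intro h0
  have hL : ∀ x, L x = 0 := by
    intro x
    have h1 := (iSup_eq_bot.1 h0) (x + t 0)
    have h2 := (ENNReal.tsum_eq_zero.1 h1) 0
    rw [ENNReal.ofReal_eq_zero, add_sub_cancel_right] at h2
    exact le_antisymm h2 (hLnonneg x)
  have hχ : ∀ x u, χ x u = 0 := by
    intro x u
    have := hχ3 x u 0
    rw [hL, hχ2, zero_mul, sub_zero] at this
    exact abs_nonpos_iff.1 this
  obtain ⟨M₂, -, W, hW⟩ := hχ4
  have hlim : Tendsto (fun w : ℝ => M₂ * w ^ (-θ₀)) atTop (nhds 0) := by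
    simpa using (tendsto_rpow_neg_atTop hθ₀).const_mul M₂
  obtain ⟨w, hw1, hw2⟩ := ((hlim.eventually_lt_const one_pos).and (eventually_ge_atTop W)).exists
  have := hW w hw2 0 1 one_ne_zero
  simp [hχ] at this
  linarith

lemma finite_nodes_near {t : ℤ → ℝ} (htop : Tendsto t atTop atTop) (hbot : Tendsto t atBot atBot)
    (a R : ℝ) : {k : ℤ | |a - t k| ≤ R}.Finite := by
  obtain ⟨K₁, hK₁⟩ := eventually_atTop.1 (htop.eventually_gt_atTop (a + R))
  obtain ⟨K₂, hK₂⟩ := eventually_atBot.1 (hbot.eventually_lt_atBot (a - R))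
  refine (Set.finite_Icc K₂ K₁).subset fun k hk => ?_
  have hk' := abs_le.1 (show |a - t k| ≤ R from hk)
  constructor
  · by_contra h
    linarith [hK₂ k (not_le.1 h).le]
  · by_contra h
    linarith [hK₁ k (not_le.1 h).le]

/-! ### Pointwise control of differences of discrete sums -/

/-- Discrete Jensen inequality with the sub-probability weights `L (a - t k) / m`, followed by
condition (H). Only finitely many nodes meet the support of `L`, so all series are finite sums. -/
lemma phi_series_diff_le {t : ℤ → ℝ} (htop : Tendsto t atTop atTop) (hbot : Tendsto t atBot atBot)
    {χ : ℝ → ℝ → ℝ} {L ψ φ η : ℝ → ℝ}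
    (hφ : IsPhiFun φ) (hφc : ConvexOn ℝ (Set.Ici 0) φ) (hψ : IsPhiFun ψ) (hη : IsPhiFun η)
    {lam C : ℝ} (hlam : 0 ≤ lam) (hC : ∀ u : ℝ, 0 ≤ u → φ (C * ψ u) ≤ η (lam * u))
    (hχ2 : ∀ x : ℝ, χ x 0 = 0) (hLnonneg : ∀ x : ℝ, 0 ≤ L x)
    {R : ℝ} (hR : ∀ x, L x ≠ 0 → |x| ≤ R)
    (hχ3 : ∀ x u v : ℝ, |χ x u - χ x v| ≤ L x * ψ (|u - v|))
    {m ν : ℝ} (hm : 0 < m) (hν : 0 ≤ ν) (hνm : ν * m ≤ C)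
    {x : ℝ} (hsum : ∑' k : ℤ, ENNReal.ofReal (L (x - t k)) ≤ ENNReal.ofReal m) (a b : ℤ → ℝ) :
    ENNReal.ofReal
        (φ (ν * |∑' k : ℤ, χ (x - t k) (a k) - ∑' k : ℤ, χ (x - t k) (b k)|)) ≤
      ENNReal.ofReal m⁻¹ *
        ∑' k : ℤ, ENNReal.ofReal (L (x - t k)) * ENNReal.ofReal (η (lam * |a k - b k|)) := by
  set F : Finset ℤ := (finite_nodes_near htop hbot x R).toFinset with hF
  have hLF : ∀ k ∉ F, L (x - t k) = 0 := by
    intro k hk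
    by_contra h
    exact hk (by simpa [hF] using hR _ h)
  have hχF : ∀ k ∉ F, ∀ u, χ (x - t k) u = 0 := by
    intro k hk u
    have := hχ3 (x - t k) u 0
    rw [hLF k hk, hχ2, zero_mul, sub_zero] at this
    exact abs_nonpos_iff.1 this
  rw [tsum_eq_sum (s := F) fun k hk => hχF k hk _, tsum_eq_sum (s := F) fun k hk => hχF k hk _,
    tsum_eq_sum (s := F) fun k hk => by simp [hLF k hk], ← Finset.sum_sub_distrib]
  have hs : ∑ k ∈ F, L (x - t k) ≤ m := by
    rw [tsum_eq_sum (s := F) fun k hk => by simp [hLF k hk],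
      ← ENNReal.ofReal_sum_of_nonneg fun k _ => hLnonneg _] at hsum
    exact (ENNReal.ofReal_le_ofReal_iff hm.le).1 hsum
  have hηpos : ∀ k, 0 ≤ η (lam * |a k - b k|) := fun k => hη.nonneg (by positivity)
  have hψpos : ∀ k, 0 ≤ ψ |a k - b k| := fun k => hψ.nonneg (abs_nonneg _)
  have hreal : φ (ν * |∑ k ∈ F, (χ (x - t k) (a k) - χ (x - t k) (b k))|) ≤
      m⁻¹ * ∑ k ∈ F, L (x - t k) * η (lam * |a k - b k|) := by
    have h1 : ν * |∑ k ∈ F, (χ (x - t k) (a k) - χ (x - t k) (b k))| ≤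
        ∑ k ∈ F, (m⁻¹ * L (x - t k)) * (ν * m * ψ |a k - b k|) := by
      calc ν * |∑ k ∈ F, (χ (x - t k) (a k) - χ (x - t k) (b k))|
          ≤ ν * ∑ k ∈ F, L (x - t k) * ψ |a k - b k| := by
            gcongr
            exact (Finset.abs_sum_le_sum_abs _ _).trans (Finset.sum_le_sum fun k _ => hχ3 _ _ _)
        _ = _ := by
            rw [Finset.mul_sum]
            refine Finset.sum_congr rfl fun k _ => ?_
            field_simp
    have h2 := hφc.map_add_sum_le (t := F) (w := fun k => m⁻¹ * L (x - t k))
      (p := fun k => ν * m * ψ |a k - b k|) (v := 1 - ∑ k ∈ F, m⁻¹ * L (x - t k)) (q := 0)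
      (fun k _ => mul_nonneg (inv_nonneg.2 hm.le) (hLnonneg _)) (by ring)
      (fun k _ => mul_nonneg (mul_nonneg hν hm.le) (hψpos k))
      (by
        rw [← Finset.mul_sum, sub_nonneg, inv_mul_eq_div, div_le_one hm]
        exact hs)
      (Set.mem_Ici.2 le_rfl)
    simp only [smul_eq_mul, mul_zero, zero_add, hφ.2.1] at h2
    refine (hφ.mono (by positivity) h1).trans (h2.trans ?_)
    rw [Finset.mul_sum]
    refine Finset.sum_le_sum fun k _ => ?_
    rw [mul_assoc]
    refine mul_le_mul_of_nonneg_left ?_ (inv_nonneg.2 hm.le)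
    refine mul_le_mul_of_nonneg_left ?_ (hLnonneg _)
    refine (hφ.mono (mul_nonneg (mul_nonneg hν hm.le) (hψpos k)) ?_).trans (hC _ (abs_nonneg _))
    exact mul_le_mul_of_nonneg_right hνm (hψpos k)
  refine (ENNReal.ofReal_le_ofReal hreal).trans_eq ?_
  rw [ENNReal.ofReal_mul (inv_nonneg.2 hm.le),
    ENNReal.ofReal_sum_of_nonneg fun k _ => mul_nonneg (hLnonneg _) (hηpos k)]
  congr 1
  exact Finset.sum_congr rfl fun k _ => ENNReal.ofReal_mul (hLnonneg _)

/-! ### The modulus of continuity -/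

lemma omegaMod_nonneg {η : ℝ → ℝ} (hη : IsPhiFun η) {lam : ℝ} (hlam : 0 ≤ lam) (f : ℝ → ℝ)
    (d : ℝ) : 0 ≤ omegaMod η lam f d :=
  Real.iSup_nonneg fun _ => integral_nonneg fun _ => hη.nonneg (by positivity)

/-- When `η (2 * lam * |f|)` is integrable, convexity bounds the integrals in the supremum
uniformly, so neither the Bochner integral nor the supremum takes a junk value. -/
lemma lintegral_shift_le_omegaMod {η : ℝ → ℝ} (hη : IsPhiFun η) (hηc : ConvexOn ℝ (Set.Ici 0) η)
    {lam : ℝ} (hlam : 0 ≤ lam) {f : ℝ → ℝ} (hf : Measurable f)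
    (hint : Integrable fun x => η (2 * lam * |f x|)) {d s : ℝ} (hs : |s| ≤ d) :
    ∫⁻ x, ENNReal.ofReal (η (lam * |f (x + s) - f x|)) ≤
      ENNReal.ofReal (omegaMod η lam f d) := by
  have hpos : ∀ s x, 0 ≤ η (lam * |f (x + s) - f x|) := fun s x => hη.nonneg (by positivity)
  have hle : ∀ s x, η (lam * |f (x + s) - f x|) ≤
      1 / 2 * η (2 * lam * |f (x + s)|) + 1 / 2 * η (2 * lam * |f x|) := by
    intro s x
    have h1 := hηc.2 (x := 2 * lam * |f (x + s)|) (y := 2 * lam * |f x|)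
      (Set.mem_Ici.2 (by positivity)) (Set.mem_Ici.2 (by positivity))
      (show (0 : ℝ) ≤ 1 / 2 by norm_num) (show (0 : ℝ) ≤ 1 / 2 by norm_num) (by norm_num)
    simp only [smul_eq_mul] at h1
    refine (hη.mono (by positivity) ?_).trans h1
    have := mul_le_mul_of_nonneg_left (abs_sub (f (x + s)) (f x)) hlam
    linarith
  have hshift : ∀ s, Integrable fun x => η (2 * lam * |f (x + s)|) :=
    fun s => hint.comp_add_right s
  have hG : ∀ s, Integrable fun x =>
      1 / 2 * η (2 * lam * |f (x + s)|) + 1 / 2 * η (2 * lam * |f x|) :=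
    fun s => ((hshift s).const_mul _).add (hint.const_mul _)
  have hmeas : ∀ s, Measurable fun x => η (lam * |f (x + s) - f x|) := fun s =>
    hη.measurable_mul_abs ((hf.comp (measurable_id.add_const s)).sub hf) hlam
  have hI : ∀ s, Integrable fun x => η (lam * |f (x + s) - f x|) := by
    intro s
    refine (hG s).mono' (hmeas s).aestronglyMeasurable (Eventually.of_forall fun x => ?_)
    rw [Real.norm_of_nonneg (hpos s x)]
    exact hle s x
  have hb : ∀ s, ∫ x, η (lam * |f (x + s) - f x|) ≤ ∫ x, η (2 * lam * |f x|) := by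
    intro s
    refine (integral_mono (hI s) (hG s) (hle s)).trans_eq ?_
    rw [integral_add ((hshift s).const_mul _) (hint.const_mul _), integral_const_mul,
      integral_const_mul, integral_add_right_eq_self (fun x => η (2 * lam * |f x|)) s]
    ring
  rw [← ofReal_integral_eq_lintegral_ofReal (hI s) (Eventually.of_forall (hpos s))]
  refine ENNReal.ofReal_le_ofReal ?_
  exact le_ciSup (f := fun s : {s : ℝ // |s| ≤ d} => ∫ x : ℝ, η (lam * |f (x + (s : ℝ)) - f x|))
    ⟨∫ x, η (2 * lam * |f x|), by rintro _ ⟨s, rfl⟩; exact hb s⟩ ⟨s, hs⟩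

/-! ### Integral estimates -/

/-- After translating the `k`-th term by `t k / w`, the cells `(t k / w, t (k + 1) / w]` are
disjoint and their integrals add up to at most one integral over the line. -/
lemma lintegral_translated_cells_le {t : ℤ → ℝ} {δ : ℝ} (hδ : 0 < δ)
    (hgap : ∀ k : ℤ, δ ≤ t (k + 1) - t k) {L : ℝ → ℝ} (hLmeas : Measurable L)
    (hLnonneg : ∀ x, 0 ≤ L x) (hL1 : Integrable L) {R : ℝ} (hR : ∀ x, L x ≠ 0 → |x| ≤ R)
    {w : ℝ} (hw : 0 < w) {E : ℝ × ℝ → ENNReal} (hE : Measurable E) {Ω : ENNReal}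
    (hΩ : ∀ y, |y| ≤ R / w → ∫⁻ u, E (y, u) ≤ Ω) :
    ∫⁻ x, ∑' k : ℤ, ENNReal.ofReal (L (w * x - t k)) *
        (ENNReal.ofReal (w / (t (k + 1) - t k)) *
          ∫⁻ u in Set.Ioc (t k / w) (t (k + 1) / w), E (x - t k / w, u)) ≤
      ENNReal.ofReal ((∫ u, L u) / δ) * Ω := by
  set I : ℤ → Set ℝ := fun k => Set.Ioc (t k / w) (t (k + 1) / w) with hI
  have hmono : Monotone fun k => t k / w := fun i j hij =>
    div_le_div_of_nonneg_right ((nodes_strictMono hδ hgap).monotone hij) hw.le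
  have hdisj : Pairwise (Function.onFun Disjoint I) := by
    have := hmono.pairwise_disjoint_on_Ioc_succ
    simpa [Order.succ_eq_add_one] using this
  have hLw : Measurable fun y => ENNReal.ofReal (L (w * y)) :=
    (hLmeas.comp (measurable_id.const_mul w)).ennreal_ofReal
  have hinner : ∀ k, Measurable fun y => ∫⁻ u in I k, E (y, u) := fun k =>
    hE.lintegral_prod_right'
  set g : ℤ → ℝ → ENNReal := fun k y => ENNReal.ofReal (L (w * y)) *
    (ENNReal.ofReal (w / (t (k + 1) - t k)) * ∫⁻ u in I k, E (y, u)) with hg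
  have hgm : ∀ k, Measurable (g k) := fun k => hLw.mul ((hinner k).const_mul _)
  have hshift : ∀ k x, ENNReal.ofReal (L (w * x - t k)) *
      (ENNReal.ofReal (w / (t (k + 1) - t k)) * ∫⁻ u in I k, E (x - t k / w, u)) =
      g k (x - t k / w) := by
    intro k x
    have : w * (x - t k / w) = w * x - t k := by field_simp
    simp only [hg, this]
  have hLint : ∫⁻ y, ENNReal.ofReal (L (w * y)) = ENNReal.ofReal (w⁻¹ * ∫ u, L u) := by
    rw [← ofReal_integral_eq_lintegral_ofReal (hL1.comp_mul_left' hw.ne')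
      (Eventually.of_forall fun y => hLnonneg _), Measure.integral_comp_mul_left,
      abs_of_pos (inv_pos.2 hw), smul_eq_mul]
  calc ∫⁻ x, ∑' k : ℤ, ENNReal.ofReal (L (w * x - t k)) *
        (ENNReal.ofReal (w / (t (k + 1) - t k)) * ∫⁻ u in I k, E (x - t k / w, u))
      = ∫⁻ x, ∑' k : ℤ, g k (x - t k / w) := by simp only [hshift]
    _ = ∑' k : ℤ, ∫⁻ x, g k (x - t k / w) :=
        lintegral_tsum fun k => ((hgm k).comp (measurable_id.sub_const _)).aemeasurable
    _ = ∑' k : ℤ, ∫⁻ y, g k y := by simp only [lintegral_sub_right_eq_self (g _)]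
    _ = ∫⁻ y, ∑' k : ℤ, g k y := (lintegral_tsum fun k => (hgm k).aemeasurable).symm
    _ ≤ ∫⁻ y, ENNReal.ofReal (L (w * y)) * (ENNReal.ofReal (w / δ) * Ω) := by
        refine lintegral_mono fun y => ?_
        simp only [hg, ENNReal.tsum_mul_left]
        by_cases h0 : L (w * y) = 0
        · simp [h0]
        gcongr
        have hy : |y| ≤ R / w := by
          have := hR _ h0
          rw [abs_mul, abs_of_pos hw] at this
          rw [le_div_iff₀ hw]
          linarith
        calc ∑' k : ℤ, ENNReal.ofReal (w / (t (k + 1) - t k)) * ∫⁻ u in I k, E (y, u)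
            ≤ ∑' k : ℤ, ENNReal.ofReal (w / δ) * ∫⁻ u in I k, E (y, u) := by
              refine ENNReal.tsum_le_tsum fun k => ?_
              gcongr
              exact hgap k
          _ = ENNReal.ofReal (w / δ) * ∫⁻ u in ⋃ k, I k, E (y, u) := by
              rw [ENNReal.tsum_mul_left, lintegral_iUnion (fun k => measurableSet_Ioc) hdisj]
          _ ≤ ENNReal.ofReal (w / δ) * Ω := by
              gcongr
              exact (setLIntegral_le_lintegral _ _).trans (hΩ y hy)
    _ = ENNReal.ofReal ((∫ u, L u) / δ) * Ω := by
        rw [lintegral_mul_const _ hLw, hLint, ← mul_assoc,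
          ← ENNReal.ofReal_mul (mul_nonneg (inv_nonneg.2 hw.le) (integral_nonneg hLnonneg))]
        congr 2
        field_simp

/-- Translating each cell to the origin puts all cells inside `(0, Δ / w]`. -/
lemma tsum_cells_le {t : ℤ → ℝ} {δ Δ : ℝ} (hδ : 0 < δ)
    (hgap : ∀ k : ℤ, δ ≤ t (k + 1) - t k ∧ t (k + 1) - t k ≤ Δ) {L : ℝ → ℝ}
    {w : ℝ} (hw : 0 < w) {e : ℝ → ENNReal} (he : Measurable e) {m a : ℝ}
    (hsum : ∑' k : ℤ, ENNReal.ofReal (L (a - t k)) ≤ ENNReal.ofReal m) :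
    ∑' k : ℤ, ENNReal.ofReal (L (a - t k)) *
        (ENNReal.ofReal (w / (t (k + 1) - t k)) *
          ∫⁻ u in Set.Ioc (t k / w) (t (k + 1) / w), e (u - t k / w)) ≤
      ENNReal.ofReal m * (ENNReal.ofReal (w / δ) * ∫⁻ s in Set.Ioc 0 (Δ / w), e s) := by
  have hcell : ∀ k : ℤ, ∫⁻ u in Set.Ioc (t k / w) (t (k + 1) / w), e (u - t k / w) ≤
      ∫⁻ s in Set.Ioc 0 (Δ / w), e s := by
    intro k
    have hpre : Set.Ioc (t k / w) (t (k + 1) / w) =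
        (fun u => u - t k / w) ⁻¹' Set.Ioc 0 ((t (k + 1) - t k) / w) := by
      ext u
      simp [sub_div]
    rw [hpre, (measurePreserving_sub_right volume (t k / w)).setLIntegral_comp_preimage
      measurableSet_Ioc he]
    refine lintegral_mono_set (Set.Ioc_subset_Ioc_right ?_)
    exact div_le_div_of_nonneg_right (hgap k).2 hw.le
  calc _ ≤ ∑' k : ℤ, ENNReal.ofReal (L (a - t k)) *
        (ENNReal.ofReal (w / δ) * ∫⁻ s in Set.Ioc 0 (Δ / w), e s) := by
        refine ENNReal.tsum_le_tsum fun k => ?_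
        refine mul_le_mul_right (mul_le_mul' (ENNReal.ofReal_le_ofReal ?_) (hcell k)) _
        exact div_le_div_of_nonneg_left hw.le hδ (hgap k).1
    _ ≤ _ := by
        rw [ENNReal.tsum_mul_right]
        gcongr

lemma lintegral_setLIntegral_le {E : ℝ × ℝ → ENNReal} (hE : Measurable E) {d : ℝ} {Ω : ENNReal}
    (hΩ : ∀ y, |y| ≤ d → ∫⁻ u, E (y, u) ≤ Ω) :
    ∫⁻ x, ∫⁻ s in Set.Ioc 0 d, E (s, x) ≤ ENNReal.ofReal d * Ω := by
  rw [lintegral_lintegral_swap (f := fun x s => E (s, x)) (hE.comp measurable_swap).aemeasurable]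
  calc ∫⁻ s in Set.Ioc 0 d, ∫⁻ x, E (s, x) ≤ ∫⁻ _s in Set.Ioc 0 d, Ω := by
        refine setLIntegral_mono measurable_const fun s hs => hΩ s ?_
        rw [abs_of_pos hs.1]
        exact hs.2
    _ = ENNReal.ofReal d * Ω := by
        rw [setLIntegral_const, Real.volume_Ioc, sub_zero, mul_comm]

/-- A Bochner integral of a nonnegative function is bounded by any real bound of its lower
integral, whether or not the function is measurable. -/
lemma integral_le_of_lintegral_le {g : ℝ → ℝ} (hg : ∀ x, 0 ≤ g x) {B : ℝ} (hB : 0 ≤ B)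
    (h : ∫⁻ x, ENNReal.ofReal (g x) ≤ ENNReal.ofReal B) : ∫ x, g x ≤ B := by
  by_cases hm : AEStronglyMeasurable g
  · rw [integral_eq_lintegral_of_nonneg_ae (Eventually.of_forall hg) hm]
    exact ENNReal.toReal_le_of_le_ofReal hB h
  · rwa [integral_non_aestronglyMeasurable hm]

lemma eta_cell_average_le {η : ℝ → ℝ} (hη : IsPhiFun η) (hηc : ConvexOn ℝ (Set.Ici 0) η)
    {lam : ℝ} (hlam : 0 ≤ lam) {g : ℝ → ℝ} (hg : Measurable g) {a b w : ℝ} (hab : a < b)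
    (hw : 0 < w) (hgi : IntervalIntegrable g volume (a / w) (b / w)) :
    ENNReal.ofReal (η (lam * |(w / (b - a)) * ∫ u in (a / w)..(b / w), g u|)) ≤
      ENNReal.ofReal (w / (b - a)) *
        ∫⁻ u in Set.Ioc (a / w) (b / w), ENNReal.ofReal (η (lam * |g u|)) := by
  have h := eta_average_le hη hηc hlam hg (div_lt_div_of_pos_right hab hw) hgi
  rwa [← sub_div, inv_div] at h

/-- Corollary: quantitative estimate in Orlicz spaces for kernels whose Lipschitz
function `L` has compact support. -/
theorem quantitative_estimate_compact_support
    (t : ℤ → ℝ) (δ Δ : ℝ) (hδ : 0 < δ) (hδΔ : δ ≤ Δ)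
    (hgap : ∀ k : ℤ, δ ≤ t (k + 1) - t k ∧ t (k + 1) - t k ≤ Δ)
    (htop : Tendsto t atTop atTop) (hbot : Tendsto t atBot atBot)
    (χ : ℝ → ℝ → ℝ) (L ψ φ η : ℝ → ℝ)
    (hφ : IsPhiFun φ) (hφconv : ConvexOn ℝ (Set.Ici 0) φ)
    (hη : IsPhiFun η) (hηconv : ConvexOn ℝ (Set.Ici 0) η)
    (hψ : IsPhiFun ψ)
    -- condition (H)
    (hH : ∀ lam : ℝ, lam ∈ Set.Ioo (0 : ℝ) 1 → ∃ C ∈ Set.Ioo (0 : ℝ) 1,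
      ∀ u : ℝ, 0 ≤ u → φ (C * ψ u) ≤ η (lam * u))
    -- (χ1)
    (hχ1 : ∀ x u w : ℝ, 0 < w → Summable (fun k : ℤ => χ (w * x - t k) u))
    -- (χ2)
    (hχ2 : ∀ x : ℝ, χ x 0 = 0)
    -- (χ3), with L of compact support
    (hLmeas : Measurable L) (hLnonneg : ∀ x : ℝ, 0 ≤ L x)
    (hLsupp : HasCompactSupport L)
    (hχ3 : ∀ x u v : ℝ, |χ x u - χ x v| ≤ L x * ψ (|u - v|))
    -- (χ4)
    (θ₀ : ℝ) (hθ₀ : 0 < θ₀)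
    (hχ4 : ∃ M₂ > (0 : ℝ), ∃ W : ℝ, ∀ w ≥ W, ∀ x u : ℝ, u ≠ 0 →
      |(∑' k : ℤ, χ (w * x - t k) u) / u - 1| ≤ M₂ * w ^ (-θ₀))
    -- (L1)
    (hL1 : Integrable L)
    (hLbd : ∃ ε > (0 : ℝ), ∃ B : ℝ, ∀ x : ℝ, |x| ≤ ε → L x ≤ B)
    -- (L2)
    (hL2 : ∃ β₀ > (0 : ℝ), dMoment t L β₀ < ⊤)
    -- f ∈ L^{φ+η}(ℝ)
    (f : ℝ → ℝ) (hfmeas : Measurable f) (hfloc : LocallyIntegrable f)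
    (hf : ∃ lam > (0 : ℝ),
      Integrable (fun x : ℝ => φ (lam * |f x|) + η (lam * |f x|)))
    -- the series defining `S_w f` converges everywhere
    (hconv : ∀ w > (0 : ℝ), ∀ x : ℝ, Summable (fun k : ℤ => χ (w * x - t k)
      ((w / (t (k + 1) - t k)) * ∫ u in (t k / w)..(t (k + 1) / w), f u))) :
    ∀ α : ℝ, 0 < α → α < 1 →
      ∃ μ > (0 : ℝ), ∃ lam₀ > (0 : ℝ), ∃ lam > (0 : ℝ), ∃ W : ℝ, ∀ w ≥ W,
        Iph φ (fun x => μ * (SwOp t χ f w x - f x)) ≤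
          ((∫ u : ℝ, L u) / (3 * δ * m0R t L)) * omegaMod η lam f (1 / w ^ α)
          + (Δ / (3 * δ)) * omegaMod η lam f (Δ / w)
          + (Iph φ (fun x => lam₀ * f x) / 3) * w ^ (-θ₀) := by
  intro α _ hα1
  have hgap1 : ∀ k : ℤ, δ ≤ t (k + 1) - t k := fun k => (hgap k).1
  have hMtop := iSup_tsum_ne_top hδ hgap1 hLnonneg hLbd hL2
  have hMzero := iSup_tsum_ne_zero hLnonneg hχ2 hχ3 hθ₀ hχ4
  set m := m0R t L with hm_def
  have hm : 0 < m := ENNReal.toReal_pos hMzero hMtop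
  have hsum : ∀ x : ℝ, ∑' k : ℤ, ENNReal.ofReal (L (x - t k)) ≤ ENNReal.ofReal m := by
    intro x
    rw [hm_def, m0R, ENNReal.ofReal_toReal hMtop]
    exact le_iSup (fun u : ℝ => ∑' k : ℤ, ENNReal.ofReal (L (u - t k))) x
  obtain ⟨R, hR⟩ : ∃ R : ℝ, ∀ x, L x ≠ 0 → |x| ≤ R := by
    obtain ⟨R, hR⟩ := hLsupp.isCompact.isBounded.exists_norm_le
    exact ⟨R, fun x hx => hR x (subset_tsupport L hx)⟩
  obtain ⟨lf, hlf, hfint⟩ := hf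
  obtain ⟨M₂, hM₂, W₂, hW₂⟩ := hχ4
  have hφm : Measurable fun x => φ (lf * |f x|) := hφ.measurable_mul_abs hfmeas hlf.le
  have hηpos' : ∀ {c : ℝ}, 0 ≤ c → ∀ x, 0 ≤ η (c * |f x|) := fun hc x =>
    hη.nonneg (mul_nonneg hc (abs_nonneg _))
  have hφpos' : ∀ x, 0 ≤ φ (lf * |f x|) := fun x => hφ.nonneg (by positivity)
  have hφint : Integrable fun x => φ (lf * |f x|) := by
    refine hfint.mono' hφm.aestronglyMeasurable (Eventually.of_forall fun x => ?_)
    rw [Real.norm_of_nonneg (hφpos' x)]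
    linarith [hηpos' hlf.le x]
  -- `lam < 1` is what condition (H) needs, `2 * lam ≤ lf` makes the modulus of continuity finite.
  set lam := min (1 / 2) (lf / 2) with hlam_def
  have hlam : 0 < lam := lt_min (by norm_num) (by positivity)
  have hlam1 : lam < 1 := (min_le_left _ _).trans_lt (by norm_num)
  have hlam2 : 2 * lam ≤ lf := by linarith [min_le_right (1 / 2 : ℝ) (lf / 2)]
  have hηint : Integrable fun x => η (2 * lam * |f x|) := by
    refine hfint.mono' (hη.measurable_mul_abs hfmeas (by positivity)).aestronglyMeasurable
      (Eventually.of_forall fun x => ?_)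
    rw [Real.norm_of_nonneg (hηpos' (by positivity) x)]
    have : η (2 * lam * |f x|) ≤ η (lf * |f x|) :=
      hη.mono (by positivity) (by gcongr)
    linarith [hφpos' x]
  obtain ⟨C, ⟨hC0, -⟩, hC⟩ := hH lam ⟨hlam, hlam1⟩
  set μ := min (C / (3 * m)) (lf / (3 * M₂)) with hμ_def
  have hμ : 0 < μ := lt_min (by positivity) (by positivity)
  have hμm : 3 * μ * m ≤ C := by
    have := min_le_left (C / (3 * m)) (lf / (3 * M₂))
    rw [← hμ_def, le_div_iff₀ (by positivity)] at this
    linarith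
  have hμM : 3 * μ * M₂ ≤ lf := by
    have := min_le_right (C / (3 * m)) (lf / (3 * M₂))
    rw [← hμ_def, le_div_iff₀ (by positivity)] at this
    linarith
  set E : ℝ × ℝ → ENNReal := fun p => ENNReal.ofReal (η (lam * |f (p.2 + p.1) - f p.2|))
    with hE_def
  have hE : Measurable E := by
    refine (hη.measurable_mul_abs ?_ hlam.le).ennreal_ofReal
    exact (hfmeas.comp (measurable_snd.add measurable_fst)).sub (hfmeas.comp measurable_snd)
  have hω : ∀ d s : ℝ, |s| ≤ d → ∫⁻ u, E (s, u) ≤ ENNReal.ofReal (omegaMod η lam f d) :=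
    fun d s hs => lintegral_shift_le_omegaMod hη hηconv hlam.le hfmeas hηint hs
  have hωpos : ∀ d, 0 ≤ omegaMod η lam f d := omegaMod_nonneg hη hlam.le f
  -- The support radius of `L (w ·)` is `R / w`, eventually below `1 / w ^ α` since `α < 1`.
  have hev : ∀ᶠ w : ℝ in atTop, W₂ ≤ w ∧ 1 ≤ w ∧ R ≤ w ^ (1 - α) :=
    (eventually_ge_atTop W₂).and ((eventually_ge_atTop 1).and
      ((tendsto_rpow_atTop (sub_pos.2 hα1)).eventually_ge_atTop R))
  obtain ⟨W, hW⟩ := eventually_atTop.1 hev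
  refine ⟨μ, hμ, lf, hlf, lam, hlam, W, fun w hwW => ?_⟩
  obtain ⟨hw2, hw1, hwR⟩ := hW w hwW
  have hw : 0 < w := one_pos.trans_le hw1
  have hRw : R / w ≤ 1 / w ^ α := by
    rw [div_le_div_iff₀ hw (by positivity), one_mul]
    calc R * w ^ α ≤ w ^ (1 - α) * w ^ α := by gcongr
      _ = w := by rw [← Real.rpow_add hw, sub_add_cancel, Real.rpow_one]
  have hwθ : w ^ (-θ₀) ≤ 1 := Real.rpow_le_one_of_one_le_of_nonpos hw1 (by linarith)
  have hwθ0 : 0 ≤ w ^ (-θ₀) := by positivity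
  set T₁ : ℝ → ENNReal := fun x => ∑' k : ℤ, ENNReal.ofReal (L (w * x - t k)) *
    (ENNReal.ofReal (w / (t (k + 1) - t k)) *
      ∫⁻ u in Set.Ioc (t k / w) (t (k + 1) / w), E (x - t k / w, u)) with hT₁
  set T₂ : ℝ → ENNReal := fun x => ∫⁻ s in Set.Ioc 0 (Δ / w), E (s, x) with hT₂
  have hT₂m : Measurable T₂ := hE.lintegral_prod_left'
  have hI₁ : ∫⁻ x, T₁ x ≤ ENNReal.ofReal ((∫ u, L u) / δ) *
      ENNReal.ofReal (omegaMod η lam f (1 / w ^ α)) :=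
    lintegral_translated_cells_le hδ hgap1 hLmeas hLnonneg hL1 hR hw hE
      fun y hy => hω _ y (hy.trans hRw)
  have hI₂ : ∫⁻ x, T₂ x ≤ ENNReal.ofReal (Δ / w) * ENNReal.ofReal (omegaMod η lam f (Δ / w)) :=
    lintegral_setLIntegral_le hE (hω _)
  have hfi : ∀ a b c : ℝ, IntervalIntegrable (fun u => f (u + c)) volume a b := fun a b c => by
    have h : IntervalIntegrable f volume (a + c) (b + c) :=
      (hfloc.integrableOn_isCompact isCompact_uIcc).intervalIntegrable
    simpa using h.comp_add_right c
  have hpoint : ∀ x, ENNReal.ofReal (φ |μ * (SwOp t χ f w x - f x)|) ≤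
      ENNReal.ofReal (1 / 3) * (ENNReal.ofReal (w ^ (-θ₀) * φ (lf * |f x|)) +
        (ENNReal.ofReal (w / δ) * T₂ x + ENNReal.ofReal m⁻¹ * T₁ x)) := by
    intro x
    set a : ℤ → ℝ := fun k =>
      (w / (t (k + 1) - t k)) * ∫ u in (t k / w)..(t (k + 1) / w), f u with ha
    set b : ℤ → ℝ := fun k =>
      (w / (t (k + 1) - t k)) * ∫ u in (t k / w)..(t (k + 1) / w), f (u + (x - t k / w)) with hb
    have hfi0 : ∀ a b : ℝ, IntervalIntegrable f volume a b := fun a b => by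
      simpa using hfi a b 0
    have hsd : ∀ c, Measurable fun u => f (u + c) := fun c =>
      hfmeas.comp (measurable_id.add_const c)
    have hlt : ∀ k, t k < t (k + 1) := fun k => by linarith [hgap1 k]
    set A₁ := ∑' k : ℤ, χ (w * x - t k) (a k) - ∑' k : ℤ, χ (w * x - t k) (b k) with hA₁
    set A₂ := ∑' k : ℤ, χ (w * x - t k) (b k) - ∑' k : ℤ, χ (w * x - t k) (f x) with hA₂
    set A₃ := ∑' k : ℤ, χ (w * x - t k) (f x) - f x with hA₃
    have h1 : ENNReal.ofReal (φ (3 * μ * |A₁|)) ≤ ENNReal.ofReal m⁻¹ * T₁ x := by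
      refine (phi_series_diff_le htop hbot hφ hφconv hψ hη hlam.le hC hχ2 hLnonneg hR hχ3 hm
        (by positivity) hμm (hsum _) a b).trans ?_
      refine mul_le_mul_right (ENNReal.tsum_le_tsum fun k => mul_le_mul_right ?_ _) _
      have hab : |a k - b k| = |(w / (t (k + 1) - t k)) *
          ∫ u in (t k / w)..(t (k + 1) / w), (f (u + (x - t k / w)) - f u)| := by
        rw [intervalIntegral.integral_sub (hfi _ _ _) (hfi0 _ _), mul_sub, abs_sub_comm]
      rw [hab]
      exact eta_cell_average_le (g := fun u => f (u + (x - t k / w)) - f u) hη hηconv hlam.le ((hsd _).sub hfmeas) (hlt k) hw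
        ((hfi _ _ _).sub (hfi0 _ _))
    have h2 : ENNReal.ofReal (φ (3 * μ * |A₂|)) ≤ ENNReal.ofReal (w / δ) * T₂ x := by
      refine (phi_series_diff_le htop hbot hφ hφconv hψ hη hlam.le hC hχ2 hLnonneg hR hχ3 hm
        (by positivity) hμm (hsum _) b fun _ => f x).trans ?_
      have hcells := tsum_cells_le (m := m) hδ hgap hw
        (hE.comp (measurable_id.prodMk measurable_const) : Measurable fun s => E (s, x))
        (hsum (w * x))
      calc _ ≤ ENNReal.ofReal m⁻¹ * (ENNReal.ofReal m * (ENNReal.ofReal (w / δ) * T₂ x)) := by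
            refine mul_le_mul_right ((ENNReal.tsum_le_tsum fun k => ?_).trans hcells) _
            refine mul_le_mul_right ?_ _
            have hbf : b k - f x = (w / (t (k + 1) - t k)) *
                ∫ u in (t k / w)..(t (k + 1) / w), (f (u + (x - t k / w)) - f x) := by
              have : t (k + 1) - t k ≠ 0 := (sub_pos.2 (hlt k)).ne'
              rw [intervalIntegral.integral_sub (hfi _ _ _) intervalIntegrable_const,
                intervalIntegral.integral_const, mul_sub, smul_eq_mul, ← sub_div]
              congr 1
              field_simp
            rw [hbf]
            refine (eta_cell_average_le (g := fun u => f (u + (x - t k / w)) - f x) hη hηconv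
              hlam.le ((hsd _).sub measurable_const) (hlt k) hw ((hfi _ _ _).sub intervalIntegrable_const)).trans_eq ?_
            have hcomm : ∀ u, u + (x - t k / w) = x + (u - t k / w) := fun u => by ring
            simp only [hE_def, hcomm, Function.comp]
        _ = _ := by
            rw [← mul_assoc, ← ENNReal.ofReal_mul (inv_nonneg.2 hm.le), inv_mul_cancel₀ hm.ne',
              ENNReal.ofReal_one, one_mul]
    have hA₃le : |A₃| ≤ M₂ * w ^ (-θ₀) * |f x| := by
      by_cases h0 : f x = 0
      · simp [hA₃, h0, hχ2]
      · have h4 := hW₂ w hw2 x (f x) h0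
        have : A₃ = ((∑' k : ℤ, χ (w * x - t k) (f x)) / f x - 1) * f x := by
          field_simp
          rfl
        rw [this, abs_mul]
        gcongr
    have h3 : φ (3 * μ * |A₃|) ≤ w ^ (-θ₀) * φ (lf * |f x|) := by
      refine (hφ.mono (by positivity) ?_).trans
        (phi_smul_le hφ hφconv hwθ0 hwθ (u := lf * |f x|) (by positivity))
      calc 3 * μ * |A₃| ≤ 3 * μ * (M₂ * w ^ (-θ₀) * |f x|) := by gcongr
        _ = w ^ (-θ₀) * ((3 * μ * M₂) * |f x|) := by ring
        _ ≤ w ^ (-θ₀) * (lf * |f x|) := by gcongr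
    have hsplit : φ |μ * (SwOp t χ f w x - f x)| ≤
        1 / 3 * (φ (3 * μ * |A₃|) + φ (3 * μ * |A₂|) + φ (3 * μ * |A₁|)) := by
      have hS : SwOp t χ f w x - f x = A₃ + A₂ + A₁ := by
        rw [hA₁, hA₂, hA₃, SwOp]
        ring
      have h := phi_add_three_le hφconv (a := μ * |A₃|) (b := μ * |A₂|) (c := μ * |A₁|)
        (by positivity) (by positivity) (by positivity)
      simp only [← mul_assoc] at h
      refine (hφ.mono (abs_nonneg _) ?_).trans h
      rw [abs_mul, abs_of_pos hμ, hS, ← mul_add, ← mul_add]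
      gcongr
      exact abs_add_three _ _ _
    refine (ENNReal.ofReal_le_ofReal hsplit).trans ?_
    have hp : ∀ A : ℝ, 0 ≤ φ (3 * μ * |A|) := fun A => hφ.nonneg (by positivity)
    rw [ENNReal.ofReal_mul (by norm_num), ENNReal.ofReal_add (add_nonneg (hp _) (hp _)) (hp _),
      ENNReal.ofReal_add (hp _) (hp _), add_assoc]
    gcongr
  have hKpos : 0 ≤ ∫ u, L u := integral_nonneg hLnonneg
  have hΔ : 0 < Δ := hδ.trans_le hδΔ
  have hJpos : 0 ≤ ∫ x, φ (lf * |f x|) := integral_nonneg hφpos'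
  have hIph : Iph φ (fun x => lf * f x) = ∫ x, φ (lf * |f x|) := by
    simp only [Iph, abs_mul, abs_of_pos hlf]
  have hω₁ := hωpos (1 / w ^ α)
  have hω₂ := hωpos (Δ / w)
  rw [hIph]
  refine integral_le_of_lintegral_le (fun x => hφ.nonneg (abs_nonneg _)) (by positivity) ?_
  calc ∫⁻ x, ENNReal.ofReal (φ |μ * (SwOp t χ f w x - f x)|)
      ≤ ∫⁻ x, ENNReal.ofReal (1 / 3) * (ENNReal.ofReal (w ^ (-θ₀) * φ (lf * |f x|)) +
        (ENNReal.ofReal (w / δ) * T₂ x + ENNReal.ofReal m⁻¹ * T₁ x)) := lintegral_mono hpoint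
    _ = ENNReal.ofReal (1 / 3) * (ENNReal.ofReal (w ^ (-θ₀) * (∫ x, φ (lf * |f x|))) +
        (ENNReal.ofReal (w / δ) * (∫⁻ x, T₂ x) + ENNReal.ofReal m⁻¹ * ∫⁻ x, T₁ x)) := by
        rw [lintegral_const_mul' _ _ ENNReal.ofReal_ne_top,
          lintegral_add_left (hφm.const_mul _).ennreal_ofReal,
          lintegral_add_left (hT₂m.const_mul _),
          lintegral_const_mul' _ _ ENNReal.ofReal_ne_top,
          lintegral_const_mul' _ _ ENNReal.ofReal_ne_top,
          ← ofReal_integral_eq_lintegral_ofReal (hφint.const_mul _)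
            (Eventually.of_forall fun x => mul_nonneg hwθ0 (hφpos' x)), integral_const_mul]
    _ ≤ ENNReal.ofReal (1 / 3) * (ENNReal.ofReal (w ^ (-θ₀) * (∫ x, φ (lf * |f x|))) +
        (ENNReal.ofReal (w / δ) *
            (ENNReal.ofReal (Δ / w) * ENNReal.ofReal (omegaMod η lam f (Δ / w))) +
          ENNReal.ofReal m⁻¹ * (ENNReal.ofReal ((∫ u, L u) / δ) *
            ENNReal.ofReal (omegaMod η lam f (1 / w ^ α))))) := by gcongr
    _ = _ := by
        rw [← ENNReal.ofReal_mul (by positivity), ← ENNReal.ofReal_mul (by positivity),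
          ← ENNReal.ofReal_mul (by positivity), ← ENNReal.ofReal_mul (by positivity),
          ← ENNReal.ofReal_add (by positivity) (by positivity),
          ← ENNReal.ofReal_add (by positivity) (by positivity),
          ← ENNReal.ofReal_mul (by positivity)]
        congr 1
        field_simp
        ring
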